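/- Let v > 0 and q ∈ ℝ with q ≤ v, let W be a d×d real symmetric positive definite matrix and R a d×d real symmetric matrix with W − R positive semidefinite, and let t ≥ 0. Set ξ = v⁻¹(R − q·v⁻¹·W), A(t) = v⁻¹W + tI, and ρ(t) = A(t)^{−1/2} ξ A(t)^{−1/2}. Then (1 − q·v⁻¹)·I − ρ(t) is positive semidefinite, i.e., ρ(t) ⪯ (1 − q/v)·I in the Loewner order. -/

import Mathlib

open Matrix
open scoped Classical

open scoped MatrixOrder in
/-- `A^(-1/2)`: the inverse of the unique positive semidefinite square root of `A`
(junk value `0` if `A` is not positive semidefinite). -/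
noncomputable def invSqrt {d : ℕ} (A : Matrix (Fin d) (Fin d) ℝ) : Matrix (Fin d) (Fin d) ℝ :=
  if h : A.PosSemidef then (CFC.sqrt A)⁻¹ else 0

/-!
Conjugation by `A^(-1/2)`, which is `CFC.conjSqrt A⁻¹ʳ`, is order preserving and sends `A` to `1`.
So it is enough to show `ξ ≤ (1 - q/v) A(t)` before conjugating, and there
`(1 - q/v) A(t) - ξ = v⁻¹ (W - R) + (1 - q/v) t I` is a sum of nonnegative terms.
-/

theorem smul_sub_smul_le_one_sub_smul_add {𝕜 E : Type*}
    [CommRing 𝕜] [PartialOrder 𝕜] [AddCommGroup E] [PartialOrder E] [IsOrderedAddMonoid E]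
    [Module 𝕜 E] [PosSMulMono 𝕜 E] {s c t : 𝕜} {w r e : E}
    (hs : 0 ≤ s) (hct : 0 ≤ (1 - c) * t) (hrw : r ≤ w) (he : 0 ≤ e) :
    s • (r - c • w) ≤ (1 - c) • (s • w + t • e) :=
  calc
    s • (r - c • w) ≤ s • (w - c • w) := by gcongr
    _ ≤ s • (w - c • w) + ((1 - c) * t) • e := le_add_of_nonneg_right (smul_nonneg hct he)
    _ = (1 - c) • (s • w + t • e) := by module

section ConjSqrt

open scoped Ring

variable {A : Type*} [Ring A] [StarRing A] [PartialOrder A] [StarOrderedRing A]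
  [TopologicalSpace A] [IsSemitopologicalRing A] [T2Space A] [Algebra ℝ A]
  [ContinuousFunctionalCalculus ℝ A IsSelfAdjoint] [NonnegSpectrumClass ℝ A]

theorem conjSqrt_ringInverse_le_smul_one {a b : A} {k : ℝ} (ha : IsStrictlyPositive a)
    (hb : b ≤ k • a) : CFC.conjSqrt a⁻¹ʳ b ≤ k • 1 :=
  calc
    CFC.conjSqrt a⁻¹ʳ b ≤ CFC.conjSqrt a⁻¹ʳ (k • a) := CFC.conjSqrt_le_conjSqrt hb
    _ = k • 1 := by rw [map_smul, CFC.conjSqrt_ringInverse_self a]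

theorem rho_le_one_sub_qv_smul_one_general [StarModule ℝ A] {v q t : ℝ} {w r : A} (hv : 0 < v)
    (hqt : 0 ≤ (v - q) * t) (hA : IsStrictlyPositive (v⁻¹ • w + t • (1 : A))) (hrw : r ≤ w) :
    CFC.conjSqrt (v⁻¹ • w + t • (1 : A))⁻¹ʳ (v⁻¹ • (r - (q * v⁻¹) • w)) ≤
      (1 - q * v⁻¹) • (1 : A) := by
  have hct : 0 ≤ (1 - q * v⁻¹) * t :=
    calc
      0 ≤ v⁻¹ * ((v - q) * t) := by positivity
      _ = (1 - q * v⁻¹) * t := by field_simp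
  exact conjSqrt_ringInverse_le_smul_one hA <|
    smul_sub_smul_le_one_sub_smul_add (inv_nonneg.2 hv.le) hct hrw zero_le_one

end ConjSqrt

open scoped MatrixOrder Ring in
theorem invSqrt_mul_mul_invSqrt {d : ℕ} {A : Matrix (Fin d) (Fin d) ℝ} (hA : A.PosSemidef)
    (X : Matrix (Fin d) (Fin d) ℝ) :
    invSqrt A * X * invSqrt A = CFC.conjSqrt A⁻¹ʳ X := by
  rw [invSqrt, dif_pos hA, hA.inv_sqrt, nonsing_inv_eq_ringInverse, CFC.conjSqrt_apply]

/-- With `ξ = v⁻¹(R - q v⁻¹ W)`, `A(t) = v⁻¹ W + t I`, `ρ(t) = A(t)^(-1/2) ξ A(t)^(-1/2)`,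
we have `ρ(t) ⪯ (1 - q/v) I` in the Loewner order. -/
theorem rho_le_one_sub_qv_smul_one {d : ℕ} (v q t : ℝ) (W R : Matrix (Fin d) (Fin d) ℝ)
    (hv : 0 < v) (hq : q ≤ v) (hW : W.PosDef) (hR : R.IsSymm)
    (hWR : (W - R).PosSemidef) (ht : 0 ≤ t) :
    ((1 - q * v⁻¹) • (1 : Matrix (Fin d) (Fin d) ℝ) -
      invSqrt (v⁻¹ • W + t • 1) * (v⁻¹ • (R - (q * v⁻¹) • W)) *
        invSqrt (v⁻¹ • W + t • 1)).PosSemidef := by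
  have hA : (v⁻¹ • W + t • (1 : Matrix (Fin d) (Fin d) ℝ)).PosDef :=
    (hW.smul (inv_pos.2 hv)).add_posSemidef (PosSemidef.one.smul ht)
  rw [invSqrt_mul_mul_invSqrt hA.posSemidef]
  open scoped MatrixOrder in
  exact rho_le_one_sub_qv_smul_one_general hv (mul_nonneg (sub_nonneg.2 hq) ht)
    hA.isStrictlyPositive hWR
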